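/- arXiv:2605.24694 — 6 statements merged into one kernel-verified Lean document; each statement's English description precedes it below -/
import Mathlib

section
/- Let n ≥ 1, let A, B ∈ Matrix n n ℂ be Hermitian matrices, and let F : ℝ → ℝ be a differentiable convex function. Then Klein's inequality holds: Tr(F(B)) − Tr(F(A)) − Tr(F'(A)(B − A)) ≥ 0. -/
open scoped ComplexOrder

/-!
For convex `F`, the Bregman remainder `F b - F a - F' a * (b - a)` is nonnegative and is a finite
sum of products `g a * h b`. If `A` and `B` have orthonormal eigenbases `u i` and `v j` with
eigenvalues `a i` and `b j`, then the trace of `g(A) * h(B)` is the sum of the `g (a i) * h (b j)`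
with weights `‖⟪u i, v j⟫‖ ^ 2`, which depend neither on `g` nor on `h`. Hence pointwise
nonnegativity of such a sum of products on the spectra passes to the trace.
-/

lemma convexOn_bregman_nonneg {s : Set ℝ} {F : ℝ → ℝ} {F' a b : ℝ} (hF : ConvexOn ℝ s F)
    (ha : a ∈ s) (hb : b ∈ s) (hF' : HasDerivWithinAt F F' s a) : 0 ≤ F b - F a - F' * (b - a) := by
  rcases lt_trichotomy a b with hab | rfl | hba
  · have h_slope := hF.le_slope_of_hasDerivWithinAt ha hb hab hF'
    rw [slope_def_field, le_div_iff₀ (sub_pos.mpr hab)] at h_slope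
    linarith
  · simp
  · have h_slope := hF.slope_le_of_hasDerivWithinAt hb ha hba hF'
    rw [slope_def_field, div_le_iff₀ (sub_pos.mpr hba)] at h_slope
    linarith

section Trace

open Matrix

variable {𝕜 m n : Type*} [RCLike 𝕜] [Fintype m] [DecidableEq m] [Fintype n] [DecidableEq n]

lemma trace_diagonal_mul_mul_diagonal_mul_conjTranspose (d : m → 𝕜) (e : n → 𝕜)
    (W : Matrix m n 𝕜) :
    (diagonal d * (W * diagonal e * Wᴴ)).trace = ∑ i, ∑ j, d i * e j * (‖W i j‖ : 𝕜) ^ 2 := by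
  simp only [trace, diag_apply, diagonal_mul, mul_apply (M := W * diagonal e), mul_diagonal,
    conjTranspose_apply, Finset.mul_sum]
  refine Finset.sum_congr rfl fun i _ ↦ Finset.sum_congr rfl fun j _ ↦ ?_
  rw [← RCLike.mul_conj, RCLike.star_def]
  ring

variable {A B : Matrix n n 𝕜}

lemma trace_cfc_mul_cfc (hA : A.IsHermitian) (hB : B.IsHermitian) (g h : ℝ → ℝ) :
    (cfc g A * cfc h B).trace = ∑ i, ∑ j, ((g (hA.eigenvalues i) * h (hB.eigenvalues j) *
      ‖((hA.eigenvectorUnitary : Matrix n n 𝕜)ᴴ * hB.eigenvectorUnitary) i j‖ ^ 2 : ℝ) : 𝕜) := by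
  rw [hA.cfc_eq, hB.cfc_eq, IsHermitian.cfc, IsHermitian.cfc, Unitary.conjStarAlgAut_apply,
    Unitary.conjStarAlgAut_apply]
  set U := (hA.eigenvectorUnitary : Matrix n n 𝕜)
  set V := (hB.eigenvectorUnitary : Matrix n n 𝕜)
  set D : Matrix n n 𝕜 := diagonal (RCLike.ofReal ∘ g ∘ hA.eigenvalues)
  set E : Matrix n n 𝕜 := diagonal (RCLike.ofReal ∘ h ∘ hB.eigenvalues)
  calc (U * D * star U * (V * E * star V)).trace
      = (D * ((Uᴴ * V) * E * (Uᴴ * V)ᴴ)).trace := by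
        rw [Matrix.mul_assoc U, Matrix.mul_assoc U, trace_mul_comm]
        simp only [star_eq_conjTranspose, conjTranspose_mul, conjTranspose_conjTranspose,
          Matrix.mul_assoc]
    _ = _ := by
        rw [trace_diagonal_mul_mul_diagonal_mul_conjTranspose]
        simp only [Function.comp_apply, RCLike.ofReal_mul, RCLike.ofReal_pow]

lemma trace_sum_cfc_mul_cfc_nonneg {ι : Type*} (hA : A.IsHermitian) (hB : B.IsHermitian)
    (t : Finset ι) (g h : ι → ℝ → ℝ)
    (hgh : ∀ a ∈ spectrum ℝ A, ∀ b ∈ spectrum ℝ B, 0 ≤ ∑ k ∈ t, g k a * h k b) :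
    0 ≤ (∑ k ∈ t, cfc (g k) A * cfc (h k) B).trace := by
  simp only [trace_sum, trace_cfc_mul_cfc hA hB]
  rw [Finset.sum_comm]
  refine Finset.sum_nonneg fun i _ ↦ ?_
  rw [Finset.sum_comm]
  refine Finset.sum_nonneg fun j _ ↦ ?_
  rw [← RCLike.ofReal_sum, ← Finset.sum_mul]
  exact RCLike.ofReal_nonneg.mpr <| mul_nonneg
    (hgh _ (hA.eigenvalues_mem_spectrum_real i) _ (hB.eigenvalues_mem_spectrum_real j))
    (sq_nonneg _)

theorem klein_inequality_general {s : Set ℝ} {F f : ℝ → ℝ}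
    (hA : A.IsHermitian) (hB : B.IsHermitian)
    (hAs : spectrum ℝ A ⊆ s) (hBs : spectrum ℝ B ⊆ s) (hconv : ConvexOn ℝ s F)
    (hF : ∀ x ∈ spectrum ℝ A, HasDerivWithinAt F (f x) s x) :
    0 ≤ (cfc F B).trace - (cfc F A).trace - (cfc f A * (B - A)).trace := by
  have h_cont (g : ℝ → ℝ) : ContinuousOn g (spectrum ℝ A) :=
    A.finite_real_spectrum.continuousOn g
  have h_cfc_sub : cfc (fun x ↦ f x * x - F x) A = cfc f A * A - cfc F A := by
    rw [cfc_sub _ _ A (h_cont _) (h_cont _), cfc_mul _ _ A (h_cont _) (h_cont _),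
      cfc_id' ℝ A hA.isSelfAdjoint]
  let g : Fin 3 → ℝ → ℝ := ![fun _ ↦ 1, fun a ↦ f a * a - F a, fun a ↦ -f a]
  let h : Fin 3 → ℝ → ℝ := ![F, fun _ ↦ 1, fun b ↦ b]
  have h_sum : ∑ k, cfc (g k) A * cfc (h k) B = cfc F B - cfc F A - cfc f A * (B - A) := by
    simp only [g, h, Fin.sum_univ_three, cons_val, cfc_const_one ℝ A hA.isSelfAdjoint,
      cfc_const_one ℝ B hB.isSelfAdjoint, cfc_id' ℝ B hB.isSelfAdjoint, h_cfc_sub, cfc_neg]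
    noncomm_ring
  rw [← trace_sub, ← trace_sub, ← h_sum]
  refine trace_sum_cfc_mul_cfc_nonneg hA hB _ g h fun a ha b hb ↦ ?_
  calc 0 ≤ F b - F a - f a * (b - a) :=
        convexOn_bregman_nonneg hconv (hAs ha) (hBs hb) (hF a ha)
    _ = ∑ k, g k a * h k b := by
        simp only [g, h, Fin.sum_univ_three, cons_val]
        ring

end Trace

/-- Klein's inequality: for Hermitian matrices `A`, `B` and a differentiable convex
function `F : ℝ → ℝ` with derivative `F' = f`,
`Tr(F(B)) − Tr(F(A)) − Tr(F'(A)(B − A)) ≥ 0`, where `F(A)` etc. are defined via the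
continuous functional calculus for Hermitian matrices. -/
theorem klein_inequality
    (n : ℕ) (hn : 1 ≤ n)
    (A B : Matrix (Fin n) (Fin n) ℂ)
    (hA : A.IsHermitian) (hB : B.IsHermitian)
    (F f : ℝ → ℝ)
    (hF : ∀ x : ℝ, HasDerivAt F (f x) x)
    (hconv : ConvexOn ℝ Set.univ F) :
    0 ≤ (hB.cfc F).trace - (hA.cfc F).trace - (hA.cfc f * (B - A)).trace := by
  simpa only [hA.cfc_eq, hB.cfc_eq] using klein_inequality_general hA hB (Set.subset_univ _)
    (Set.subset_univ _) hconv fun x _ ↦ (hF x).hasDerivWithinAt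
end

section
/- Let n ≥ 1, let A, B ∈ Matrix n n ℂ be Hermitian matrices, let F : ℝ → ℝ be a twice differentiable convex function, and let τ ∈ [0,1]. Then 0 ≤ (1−τ) Tr(F(A)) + τ Tr(F(B)) − Tr(F((1−τ)A + τB)) ≤ τ(1−τ) Tr((F'(B) − F'(A))(B − A)). -/
open scoped ComplexOrder

/-!
Write `D(X, Y) = Tr (F(X) - F(Y) - f(Y)(X - Y))` for the trace Bregman divergence of `F`.
With `C = (1 - τ) A + τ B`, the Jensen gap is `(1 - τ) D(A, C) + τ D(B, C)`, and the upper bound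
minus the Jensen gap is `(1 - τ) D(C, A) + τ D(C, B)`, so both inequalities follow from `D ≥ 0`.
This is Klein's inequality: in the eigenbases `u`, `v` of `X`, `Y`,
`D(X, Y) = ∑ i j, |⟪u i, v j⟫|² (F(x i) - F(y j) - f(y j)(x i - y j))`,
and `f` being a subgradient of `F` says precisely that each summand is nonnegative.
-/

section Subgradient

/-- `f` selects a subgradient of `F` at every point of `s`, relative to `s`: each affine function
`x ↦ F y + f y * (x - y)` with `y ∈ s` supports `F` on `s`. -/
def IsSubgradientOn (s : Set ℝ) (F f : ℝ → ℝ) : Prop :=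
  ∀ x ∈ s, ∀ y ∈ s, F y + f y * (x - y) ≤ F x

variable {s : Set ℝ} {F f : ℝ → ℝ}

lemma isSubgradientOn_of_convexOn (hF : ConvexOn ℝ s F)
    (hf : ∀ x ∈ s, HasDerivWithinAt F (f x) s x) : IsSubgradientOn s F f := by
  intro x hx y hy
  rcases lt_trichotomy x y with hxy | rfl | hyx
  · have hslope := hF.slope_le_of_hasDerivWithinAt hx hy hxy (hf y hy)
    rw [slope_def_field, div_le_iff₀ (sub_pos.mpr hxy)] at hslope
    linarith
  · simp
  · have hslope := hF.le_slope_of_hasDerivWithinAt hy hx hyx (hf y hy)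
    rw [slope_def_field, le_div_iff₀ (sub_pos.mpr hyx)] at hslope
    linarith

end Subgradient

section Spectrum

variable {R : Type*} [Ring R] [StarRing R] [PartialOrder R] [StarOrderedRing R]
  [TopologicalSpace R] [Algebra ℝ R] [StarModule ℝ R]
  [ContinuousFunctionalCalculus ℝ R IsSelfAdjoint] [NonnegSpectrumClass ℝ R]

lemma convex_setOf_spectrum_subset_Icc (m M : ℝ) :
    Convex ℝ {a : R | IsSelfAdjoint a ∧ spectrum ℝ a ⊆ Set.Icc m M} := by
  have hIcc : {a : R | IsSelfAdjoint a ∧ spectrum ℝ a ⊆ Set.Icc m M} =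
      (selfAdjoint.submodule ℝ R : Set R) ∩ Set.Icc (algebraMap ℝ R m) (algebraMap ℝ R M) := by
    ext a
    refine and_congr_right fun (ha : IsSelfAdjoint a) ↦ ?_
    rw [Set.mem_Icc, algebraMap_le_iff_le_spectrum, le_algebraMap_iff_spectrum_le]
    exact forall₂_and
  rw [hIcc]
  exact (selfAdjoint.submodule ℝ R).convex.inter (convex_Icc _ _)

lemma convex_setOf_spectrum_subset {s : Set ℝ} (hs : Convex ℝ s) :
    Convex ℝ {a : R | IsSelfAdjoint a ∧ spectrum ℝ a ⊆ s} := by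
  rintro a ⟨ha, has⟩ b ⟨hb, hbs⟩ α β hα hβ hαβ
  cases subsingleton_or_nontrivial R
  · exact Subsingleton.elim a (α • a + β • b) ▸ ⟨ha, has⟩
  set K := spectrum ℝ a ∪ spectrum ℝ b
  have hK : IsCompact K := (ContinuousFunctionalCalculus.isCompact_spectrum a).union
    (ContinuousFunctionalCalculus.isCompact_spectrum b)
  have hKne : K.Nonempty := (ContinuousFunctionalCalculus.spectrum_nonempty a ha).inl
  have hKs : K ⊆ s := Set.union_subset has hbs
  obtain ⟨m, hmK, hm⟩ := hK.exists_isLeast hKne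
  obtain ⟨M, hMK, hM⟩ := hK.exists_isGreatest hKne
  have hK_Icc : K ⊆ Set.Icc m M := fun x hx ↦ ⟨hm hx, hM hx⟩
  obtain ⟨hc, hc_Icc⟩ := convex_setOf_spectrum_subset_Icc m M
    ⟨ha, Set.subset_union_left.trans hK_Icc⟩ ⟨hb, Set.subset_union_right.trans hK_Icc⟩ hα hβ hαβ
  exact ⟨hc, hc_Icc.trans (hs.ordConnected.out (hKs hmK) (hKs hMK))⟩

end Spectrum

section TraceBregman

open Matrix

variable {n 𝕜 : Type*} [Fintype n] [DecidableEq n] [RCLike 𝕜] {X Y : Matrix n n 𝕜}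
  {s : Set ℝ} {F f : ℝ → ℝ}

/-- The transition probabilities `|⟪u i, v j⟫|²` between the eigenbases `u` of `X` and `v` of
`Y`, through which traces of products `g(X) h(Y)` are expressed in terms of eigenvalues. -/
noncomputable def eigenbasisOverlap (hX : X.IsHermitian) (hY : Y.IsHermitian) (i j : n) : ℝ :=
  ‖inner 𝕜 (hX.eigenvectorBasis i) (hY.eigenvectorBasis j)‖ ^ 2

lemma star_eigenvectorUnitary_mul_eigenvectorUnitary_apply (hX : X.IsHermitian)
    (hY : Y.IsHermitian) (i j : n) :
    (star (hX.eigenvectorUnitary : Matrix n n 𝕜) * (hY.eigenvectorUnitary : Matrix n n 𝕜)) i j =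
      inner 𝕜 (hX.eigenvectorBasis i) (hY.eigenvectorBasis j) :=
  (inner_matrix_col_col _ _ i j).symm

lemma trace_diagonal_mul_mul_diagonal_mul_star (d e : n → ℝ) (W : Matrix n n 𝕜) :
    (diagonal (RCLike.ofReal ∘ d) * W * (diagonal (RCLike.ofReal ∘ e) * star W)).trace =
      ((∑ i, ∑ j, ‖W i j‖ ^ 2 * (d i * e j) : ℝ) : 𝕜) := by
  push_cast
  simp only [trace, diag_apply]
  refine Finset.sum_congr rfl fun i _ ↦ ?_
  rw [mul_apply]
  refine Finset.sum_congr rfl fun j _ ↦ ?_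
  simp only [diagonal_mul, star_apply, Function.comp_apply]
  rw [← RCLike.mul_conj, ← RCLike.star_def]
  ring

lemma trace_cfc_mul_cfc_s14 (hX : X.IsHermitian) (hY : Y.IsHermitian) (g h : ℝ → ℝ) :
    (cfc g X * cfc h Y).trace =
      ((∑ i, ∑ j, eigenbasisOverlap hX hY i j * (g (hX.eigenvalues i) * h (hY.eigenvalues j)) :
        ℝ) : 𝕜) := by
  simp only [eigenbasisOverlap, ← star_eigenvectorUnitary_mul_eigenvectorUnitary_apply]
  rw [hX.cfc_eq, hY.cfc_eq, IsHermitian.cfc, IsHermitian.cfc, Unitary.conjStarAlgAut_apply,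
    Unitary.conjStarAlgAut_apply]
  generalize (hX.eigenvectorUnitary : Matrix n n 𝕜) = U
  generalize (hY.eigenvectorUnitary : Matrix n n 𝕜) = V
  refine Eq.trans ?_ (trace_diagonal_mul_mul_diagonal_mul_star
    (g ∘ hX.eigenvalues) (h ∘ hY.eigenvalues) (star U * V))
  rw [star_mul, star_star, Matrix.mul_assoc U, Matrix.mul_assoc U, Matrix.trace_mul_comm U]
  simp only [Matrix.mul_assoc]

/-- The trace Bregman divergence of `F` between Hermitian matrices `X` and `Y`, with `f` in the role
of `F'`. It is meaningful only for Hermitian arguments, since `cfc` is `0` elsewhere. -/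
noncomputable def traceBregman (F f : ℝ → ℝ) (X Y : Matrix n n 𝕜) : 𝕜 :=
  (cfc F X - cfc F Y - cfc f Y * (X - Y)).trace

lemma traceBregman_eq_sum (F f : ℝ → ℝ) (hX : X.IsHermitian) (hY : Y.IsHermitian) :
    traceBregman F f X Y = ((∑ i, ∑ j, eigenbasisOverlap hX hY i j *
      (F (hX.eigenvalues i) - F (hY.eigenvalues j) -
        f (hY.eigenvalues j) * (hX.eigenvalues i - hY.eigenvalues j)) : ℝ) : 𝕜) := by
  have hX' : IsSelfAdjoint X := hX
  have hY' : IsSelfAdjoint Y := hY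
  have hFX := trace_cfc_mul_cfc_s14 hX hY F (fun _ ↦ 1)
  have hFY := trace_cfc_mul_cfc_s14 hX hY (fun _ ↦ 1) F
  have hXfY := trace_cfc_mul_cfc_s14 hX hY (fun x ↦ x) f
  have hYfY := trace_cfc_mul_cfc_s14 hX hY (fun _ ↦ 1) (fun y ↦ f y * y)
  have hfY : ContinuousOn f (spectrum ℝ Y) := finite_real_spectrum.continuousOn f
  rw [cfc_const_one ℝ Y, mul_one] at hFX
  rw [cfc_const_one ℝ X, one_mul] at hFY
  rw [cfc_id' ℝ X, trace_mul_comm] at hXfY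
  rw [cfc_const_one ℝ X, one_mul, cfc_mul f (fun y ↦ y) Y, cfc_id' ℝ Y] at hYfY
  rw [traceBregman, Matrix.mul_sub, trace_sub, trace_sub, trace_sub, hFX, hFY, hXfY, hYfY]
  norm_cast
  simp only [← Finset.sum_sub_distrib]
  refine Finset.sum_congr rfl fun i _ ↦ Finset.sum_congr rfl fun j _ ↦ ?_
  ring

lemma traceBregman_nonneg (hFf : IsSubgradientOn s F f) (hX : X.IsHermitian) (hY : Y.IsHermitian)
    (hXs : spectrum ℝ X ⊆ s) (hYs : spectrum ℝ Y ⊆ s) : 0 ≤ traceBregman F f X Y := by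
  rw [traceBregman_eq_sum F f hX hY, RCLike.ofReal_nonneg]
  refine Finset.sum_nonneg fun i _ ↦ Finset.sum_nonneg fun j _ ↦ mul_nonneg (sq_nonneg _) ?_
  have hsupport := hFf _ (hXs (hX.eigenvalues_mem_spectrum_real i))
    _ (hYs (hY.eigenvalues_mem_spectrum_real j))
  linarith

lemma jensen_gap_eq_traceBregman (F f : ℝ → ℝ) (A B : Matrix n n 𝕜) (τ : ℝ) :
    (1 - τ) • (cfc F A).trace + τ • (cfc F B).trace - (cfc F ((1 - τ) • A + τ • B)).trace =
      (1 - τ) • traceBregman F f A ((1 - τ) • A + τ • B) +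
        τ • traceBregman F f B ((1 - τ) • A + τ • B) := by
  set C := (1 - τ) • A + τ • B with hC
  have hAC : A - C = (-τ) • (B - A) := by rw [hC]; module
  have hBC : B - C = (1 - τ) • (B - A) := by rw [hC]; module
  simp only [traceBregman, trace_sub, hAC, hBC, Matrix.mul_smul, trace_smul]
  module

lemma sub_jensen_gap_eq_traceBregman (F f : ℝ → ℝ) (A B : Matrix n n 𝕜) (τ : ℝ) :
    (τ * (1 - τ)) • ((cfc f B - cfc f A) * (B - A)).trace -
        ((1 - τ) • (cfc F A).trace + τ • (cfc F B).trace -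
          (cfc F ((1 - τ) • A + τ • B)).trace) =
      (1 - τ) • traceBregman F f ((1 - τ) • A + τ • B) A +
        τ • traceBregman F f ((1 - τ) • A + τ • B) B := by
  set C := (1 - τ) • A + τ • B with hC
  have hCA : C - A = τ • (B - A) := by rw [hC]; module
  have hCB : C - B = (-(1 - τ)) • (B - A) := by rw [hC]; module
  simp only [traceBregman, trace_sub, hCA, hCB, Matrix.mul_smul, trace_smul, Matrix.sub_mul]
  module

open scoped MatrixOrder in
theorem two_sided_convex_trace_inequality_general {A B : Matrix n n 𝕜} (hA : A.IsHermitian)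
    (hB : B.IsHermitian) (hs : Convex ℝ s) (hAs : spectrum ℝ A ⊆ s) (hBs : spectrum ℝ B ⊆ s)
    (hFf : IsSubgradientOn s F f) {τ : ℝ} (hτ : τ ∈ Set.Icc (0 : ℝ) 1) :
    0 ≤ (1 - τ) • (cfc F A).trace + τ • (cfc F B).trace - (cfc F ((1 - τ) • A + τ • B)).trace ∧
      (1 - τ) • (cfc F A).trace + τ • (cfc F B).trace - (cfc F ((1 - τ) • A + τ • B)).trace ≤
        (τ * (1 - τ)) • ((cfc f B - cfc f A) * (B - A)).trace := by
  have hτ₀ : 0 ≤ τ := hτ.1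
  have hτ₁ : 0 ≤ 1 - τ := sub_nonneg.mpr hτ.2
  obtain ⟨hC, hCs⟩ := convex_setOf_spectrum_subset hs ⟨hA.isSelfAdjoint, hAs⟩
    ⟨hB.isSelfAdjoint, hBs⟩ hτ₁ hτ₀ (sub_add_cancel 1 τ)
  constructor
  · rw [jensen_gap_eq_traceBregman F f]
    exact add_nonneg (smul_nonneg hτ₁ (traceBregman_nonneg hFf hA hC hAs hCs))
      (smul_nonneg hτ₀ (traceBregman_nonneg hFf hB hC hBs hCs))
  · rw [← sub_nonneg, sub_jensen_gap_eq_traceBregman]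
    exact add_nonneg (smul_nonneg hτ₁ (traceBregman_nonneg hFf hC hA hCs hAs))
      (smul_nonneg hτ₀ (traceBregman_nonneg hFf hC hB hCs hBs))

end TraceBregman

/-- Two-sided trace inequality for a twice differentiable convex function `F` with
derivative `f = F'` (and second derivative `f' = F''`), for Hermitian matrices `A`, `B`
and `τ ∈ [0,1]`:
`0 ≤ (1−τ) Tr F(A) + τ Tr F(B) − Tr F((1−τ)A + τB)
   ≤ τ(1−τ) Tr((F'(B) − F'(A))(B − A))`,
where functions of Hermitian matrices are given by the functional calculus. -/
theorem two_sided_convex_trace_inequality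
    (n : ℕ) (hn : 1 ≤ n)
    (A B : Matrix (Fin n) (Fin n) ℂ)
    (hA : A.IsHermitian) (hB : B.IsHermitian)
    (F f f' : ℝ → ℝ)
    (hF : ∀ x : ℝ, HasDerivAt F (f x) x)
    (hf : ∀ x : ℝ, HasDerivAt f (f' x) x)
    (hconv : ConvexOn ℝ Set.univ F)
    (τ : ℝ) (hτ : τ ∈ Set.Icc (0 : ℝ) 1)
    (hC : ((1 - τ) • A + τ • B).IsHermitian) :
    0 ≤ ((1 - τ : ℝ) : ℂ) * (hA.cfc F).trace + (τ : ℂ) * (hB.cfc F).trace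
          - (hC.cfc F).trace
    ∧ ((1 - τ : ℝ) : ℂ) * (hA.cfc F).trace + (τ : ℂ) * (hB.cfc F).trace
          - (hC.cfc F).trace
        ≤ ((τ * (1 - τ) : ℝ) : ℂ) * ((hB.cfc f - hA.cfc f) * (B - A)).trace := by
  simpa only [hA.cfc_eq, hB.cfc_eq, hC.cfc_eq, Complex.real_smul] using
    two_sided_convex_trace_inequality_general hA hB convex_univ (Set.subset_univ _)
      (Set.subset_univ _) (isSubgradientOn_of_convexOn hconv fun x _ ↦ (hF x).hasDerivWithinAt) hτ
end

section
/- Let n ≥ 1, let A, B ∈ Matrix n n ℂ be Hermitian matrices, and let τ ∈ [0,1]. Then the Peierls–Bogoliubov inequality holds: Tr(exp((1−τ)A + τB)) ≤ (Tr(exp A))^{1−τ} · (Tr(exp B))^{τ}; that is, τ ↦ Tr(exp((1−τ)A + τB)) is logarithmically convex on [0,1]. -/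
/-!
Expand everything in an orthonormal eigenbasis `u` of `(1 - τ) • A + τ • B`: its eigenvalues are
`(1 - τ) * ⟪uᵢ, A uᵢ⟫ + τ * ⟪uᵢ, B uᵢ⟫`, so Hölder's inequality bounds the trace of its exponential
by `(∑ exp ⟪uᵢ, A uᵢ⟫) ^ (1 - τ) * (∑ exp ⟪uᵢ, B uᵢ⟫) ^ τ`. Peierls' inequality bounds the
two sums by `Tr exp A` and `Tr exp B`: the diagonal of a Hermitian matrix in any orthonormal
basis is the image of its eigenvalues under a doubly stochastic matrix, and averaging by such a
matrix can only decrease a sum of values of a convex function.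
-/

theorem sum_rpow_mul_rpow_le {ι : Type*} (s : Finset ι) {x y : ι → ℝ} {a b : ℝ}
    (hx : ∀ i ∈ s, 0 ≤ x i) (hy : ∀ i ∈ s, 0 ≤ y i) (ha : 0 ≤ a) (hb : 0 ≤ b) (hab : a + b = 1) :
    ∑ i ∈ s, x i ^ a * y i ^ b ≤ (∑ i ∈ s, x i) ^ a * (∑ i ∈ s, y i) ^ b := by
  rcases ha.eq_or_lt with rfl | ha
  · obtain rfl : b = 1 := by simpa using hab
    simp
  rcases hb.eq_or_lt with rfl | hb
  · obtain rfl : a = 1 := by simpa using hab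
    simp
  have holder := Real.inner_le_Lp_mul_Lq_of_nonneg s (.inv_inv ha hb hab)
    (fun i hi => Real.rpow_nonneg (hx i hi) a) (fun i hi => Real.rpow_nonneg (hy i hi) b)
  have hx' : ∑ i ∈ s, (x i ^ a) ^ a⁻¹ = ∑ i ∈ s, x i :=
    Finset.sum_congr rfl fun i hi => Real.rpow_rpow_inv (hx i hi) ha.ne'
  have hy' : ∑ i ∈ s, (y i ^ b) ^ b⁻¹ = ∑ i ∈ s, y i :=
    Finset.sum_congr rfl fun i hi => Real.rpow_rpow_inv (hy i hi) hb.ne'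
  simpa only [hx', hy', one_div, inv_inv] using holder

theorem sum_exp_mul_add_mul_le {ι : Type*} (s : Finset ι) (x y : ι → ℝ) {a b : ℝ}
    (ha : 0 ≤ a) (hb : 0 ≤ b) (hab : a + b = 1) :
    ∑ i ∈ s, Real.exp (a * x i + b * y i)
      ≤ (∑ i ∈ s, Real.exp (x i)) ^ a * (∑ i ∈ s, Real.exp (y i)) ^ b := by
  simpa only [← Real.exp_mul, ← Real.exp_add, mul_comm _ a, mul_comm _ b] using
    sum_rpow_mul_rpow_le s (fun i _ => (Real.exp_pos (x i)).le)
      (fun i _ => (Real.exp_pos (y i)).le) ha hb hab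

section DoublyStochastic

open Matrix

variable {R β ι : Type*} [Field R] [LinearOrder R] [IsStrictOrderedRing R] [AddCommGroup β]
  [PartialOrder β] [IsOrderedAddMonoid β] [Module R β] [IsStrictOrderedModule R β] [Fintype ι]
  [DecidableEq ι]

theorem sum_map_mulVec_le_of_mem_doublyStochastic {M : Matrix ι ι R}
    (hM : M ∈ doublyStochastic R ι) {s : Set R} {f : R → β} (hf : ConvexOn R s f) {x : ι → R}
    (hx : ∀ j, x j ∈ s) :
    ∑ i, f ((M *ᵥ x) i) ≤ ∑ j, f (x j) := by
  have jensen (i : ι) : f ((M *ᵥ x) i) ≤ ∑ j, M i j • f (x j) :=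
    hf.map_sum_le (fun _ _ => nonneg_of_mem_doublyStochastic hM)
      (sum_row_of_mem_doublyStochastic hM i) fun j _ => hx j
  calc ∑ i, f ((M *ᵥ x) i)
      ≤ ∑ i, ∑ j, M i j • f (x j) := Finset.sum_le_sum fun i _ => jensen i
    _ = ∑ j, (∑ i, M i j) • f (x j) := by
      rw [Finset.sum_comm]
      simp only [Finset.sum_smul]
    _ = ∑ j, f (x j) := by simp only [sum_col_of_mem_doublyStochastic hM, one_smul]

end DoublyStochastic

section Hermitian

open Matrix

variable {𝕜 ι : Type*} [RCLike 𝕜] [Fintype ι] [DecidableEq ι]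

theorem re_mul_diagonal_mul_conjTranspose_apply_self {κ : Type*} (W : Matrix κ ι 𝕜) (d : ι → ℝ)
    (i : κ) :
    RCLike.re ((W * (diagonal (RCLike.ofReal ∘ d) : Matrix ι ι 𝕜) * Wᴴ) i i)
      = (W.map (fun z => ‖z‖ ^ 2) *ᵥ d) i := by
  have entry_eq (j : ι) : W i j * (d j : 𝕜) * star (W i j) = ((‖W i j‖ ^ 2 * d j : ℝ) : 𝕜) := by
    rw [mul_right_comm, RCLike.star_def, RCLike.mul_conj]
    push_cast
    rfl
  rw [mul_apply, map_sum]
  simp only [mul_diagonal, conjTranspose_apply, Function.comp_apply, entry_eq, RCLike.ofReal_re,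
    mulVec, dotProduct, map_apply]

theorem map_norm_sq_mem_doublyStochastic (W : unitaryGroup ι 𝕜) :
    (W : Matrix ι ι 𝕜).map (fun z => ‖z‖ ^ 2) ∈ doublyStochastic ℝ ι := by
  have sum_row (V : unitaryGroup ι 𝕜) (i : ι) : ∑ j, ‖(V : Matrix ι ι 𝕜) i j‖ ^ 2 = 1 := by
    have h := congr_fun₂ (mem_unitaryGroup_iff.1 V.2) i i
    rw [mul_apply, one_apply_eq] at h
    simp only [star_apply, RCLike.star_def, RCLike.mul_conj] at h
    exact_mod_cast h
  refine mem_doublyStochastic_iff_sum.2 ⟨fun i j => sq_nonneg _, sum_row W, fun j => ?_⟩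
  simpa using sum_row (star W) j

theorem re_star_mul_mul_apply_self_eq_mulVec_eigenvalues {A : Matrix ι ι 𝕜} (hA : A.IsHermitian)
    (U : unitaryGroup ι 𝕜) (i : ι) :
    RCLike.re ((star (U : Matrix ι ι 𝕜) * A * U) i i)
      = (((star U * hA.eigenvectorUnitary : unitaryGroup ι 𝕜) : Matrix ι ι 𝕜).map
          (fun z => ‖z‖ ^ 2) *ᵥ hA.eigenvalues) i := by
  rw [← re_mul_diagonal_mul_conjTranspose_apply_self]
  conv_lhs => rw [hA.spectral_theorem, Unitary.conjStarAlgAut_apply]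
  simp only [Submonoid.coe_mul, Unitary.coe_star, ← star_eq_conjTranspose, star_mul, star_star,
    mul_assoc]

theorem re_trace_cfc {A : Matrix ι ι 𝕜} (hA : A.IsHermitian) (f : ℝ → ℝ) :
    RCLike.re (hA.cfc f).trace = ∑ i, f (hA.eigenvalues i) := by
  rw [IsHermitian.cfc, Unitary.conjStarAlgAut_apply, trace_mul_comm, ← mul_assoc,
    Unitary.coe_star_mul_self, one_mul, trace_diagonal, map_sum]
  simp only [Function.comp_apply, RCLike.ofReal_re]

theorem peierls_inequality {A : Matrix ι ι 𝕜} (hA : A.IsHermitian) {s : Set ℝ} {f : ℝ → ℝ}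
    (hf : ConvexOn ℝ s f) (hs : ∀ j, hA.eigenvalues j ∈ s) (U : unitaryGroup ι 𝕜) :
    ∑ i, f (RCLike.re ((star (U : Matrix ι ι 𝕜) * A * U) i i)) ≤ RCLike.re (hA.cfc f).trace := by
  simp only [re_star_mul_mul_apply_self_eq_mulVec_eigenvalues hA, re_trace_cfc]
  exact sum_map_mulVec_le_of_mem_doublyStochastic (map_norm_sq_mem_doublyStochastic _) hf hs

theorem re_star_eigenvectorUnitary_mul_mul_apply_self {A : Matrix ι ι 𝕜} (hA : A.IsHermitian)
    (i : ι) :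
    RCLike.re ((star (hA.eigenvectorUnitary : Matrix ι ι 𝕜) * A * hA.eigenvectorUnitary) i i)
      = hA.eigenvalues i := by
  rw [← Unitary.conjStarAlgAut_star_apply (S := 𝕜), hA.conjStarAlgAut_star_eigenvectorUnitary,
    diagonal_apply_eq, Function.comp_apply, RCLike.ofReal_re]

theorem peierls_bogoliubov_general {A B : Matrix ι ι 𝕜} (hA : A.IsHermitian) (hB : B.IsHermitian)
    {τ : ℝ} (hτ : τ ∈ Set.Icc (0 : ℝ) 1) (hC : ((1 - τ) • A + τ • B).IsHermitian) :
    RCLike.re (hC.cfc Real.exp).trace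
      ≤ RCLike.re (hA.cfc Real.exp).trace ^ (1 - τ) * RCLike.re (hB.cfc Real.exp).trace ^ τ := by
  obtain ⟨hτ₀, hτ₁⟩ : 0 ≤ τ ∧ 0 ≤ 1 - τ := ⟨hτ.1, sub_nonneg.2 hτ.2⟩
  let U := hC.eigenvectorUnitary
  let rotatedDiag (M : Matrix ι ι 𝕜) (i : ι) : ℝ :=
    RCLike.re ((star (U : Matrix ι ι 𝕜) * M * U) i i)
  have eigenvalues_eq (i : ι) :
      hC.eigenvalues i = (1 - τ) * rotatedDiag A i + τ * rotatedDiag B i := by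
    rw [← re_star_eigenvectorUnitary_mul_mul_apply_self hC]
    simp only [rotatedDiag, U, mul_add, add_mul, Matrix.mul_smul, Matrix.smul_mul, Matrix.add_apply,
      Matrix.smul_apply, map_add, RCLike.smul_re]
  have peierls {M : Matrix ι ι 𝕜} (hM : M.IsHermitian) :
      ∑ i, Real.exp (rotatedDiag M i) ≤ RCLike.re (hM.cfc Real.exp).trace :=
    peierls_inequality hM convexOn_exp (fun _ => Set.mem_univ _) U
  calc RCLike.re (hC.cfc Real.exp).trace
      = ∑ i, Real.exp ((1 - τ) * rotatedDiag A i + τ * rotatedDiag B i) := by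
        simp only [re_trace_cfc, eigenvalues_eq]
    _ ≤ (∑ i, Real.exp (rotatedDiag A i)) ^ (1 - τ) * (∑ i, Real.exp (rotatedDiag B i)) ^ τ :=
        sum_exp_mul_add_mul_le _ _ _ hτ₁ hτ₀ (sub_add_cancel 1 τ)
    _ ≤ RCLike.re (hA.cfc Real.exp).trace ^ (1 - τ) * RCLike.re (hB.cfc Real.exp).trace ^ τ := by
        have trace_nonneg : 0 ≤ RCLike.re (hA.cfc Real.exp).trace :=
          (Finset.sum_nonneg fun i _ => (Real.exp_pos _).le).trans (peierls hA)
        gcongr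
        exacts [peierls hA, peierls hB]

end Hermitian

/-- The Peierls–Bogoliubov inequality: for Hermitian matrices `A`, `B` and `τ ∈ [0,1]`,
`Tr(exp((1−τ)A + τB)) ≤ (Tr exp A)^{1−τ} (Tr exp B)^τ`, i.e. `τ ↦ Tr exp((1−τ)A + τB)` is
logarithmically convex.  For a Hermitian matrix `M`, `exp M` is realized through the
functional calculus applied with `Real.exp`, which agrees with the matrix exponential. -/
theorem peierls_bogoliubov
    (n : ℕ) (hn : 1 ≤ n)
    (A B : Matrix (Fin n) (Fin n) ℂ)
    (hA : A.IsHermitian) (hB : B.IsHermitian)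
    (τ : ℝ) (hτ : τ ∈ Set.Icc (0 : ℝ) 1)
    (hC : ((1 - τ) • A + τ • B).IsHermitian) :
    ((hC.cfc Real.exp).trace).re
      ≤ ((hA.cfc Real.exp).trace).re ^ (1 - τ) * ((hB.cfc Real.exp).trace).re ^ τ :=
  peierls_bogoliubov_general hA hB hτ hC
end

section
/- Let n ≥ 1, let A, B ∈ Matrix n n ℂ be positive definite Hermitian matrices, and let τ ∈ [0,1]. Then (det((1−τ)A + τB))^{1/n} ≥ (1−τ) (det A)^{1/n} + τ (det B)^{1/n}; that is, τ ↦ (det((1−τ)A + τB))^{1/n} is concave on [0,1] (Minkowski's determinant inequality). -/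
open scoped ComplexOrder

/-!
The inequality is equivalent to superadditivity of `A ↦ (det A)^{1/n}` on positive semidefinite
matrices, since this function is positively homogeneous. If `A + B` is singular then so are `A`
and `B`. Otherwise `A + B = Sᴴ * S` with `S` invertible, and the congruence by `S⁻¹` reduces
to the case `A + B = 1`. There AM-GM on the eigenvalues bounds each `n`-th root by
the normalized trace, and the two normalized traces add up to `1`.
-/

section

open Matrix

variable {𝕜 n : Type*} [RCLike 𝕜] [Fintype n] [DecidableEq n] {A B : Matrix n n 𝕜}

lemma re_det_nonneg (hA : A.PosSemidef) : 0 ≤ RCLike.re A.det :=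
  (RCLike.nonneg_iff.1 hA.det_nonneg).1

lemma re_det_eq_prod_eigenvalues (hA : A.IsHermitian) :
    RCLike.re A.det = ∏ i, hA.eigenvalues i := by
  rw [hA.det_eq_prod_eigenvalues, ← RCLike.ofReal_prod, RCLike.ofReal_re]

lemma re_trace_eq_sum_eigenvalues (hA : A.IsHermitian) :
    RCLike.re A.trace = ∑ i, hA.eigenvalues i := by
  rw [hA.trace_eq_sum_eigenvalues, ← RCLike.ofReal_sum, RCLike.ofReal_re]

/-- The `n`-th root `(det A)^{1/n}` of the determinant of an `n × n` matrix. It is meant for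
positive semidefinite `A`, whose determinant is a nonnegative real, so taking the real part loses
nothing. -/
noncomputable def detRoot (A : Matrix n n 𝕜) : ℝ :=
  RCLike.re A.det ^ (Fintype.card n : ℝ)⁻¹

lemma detRoot_nonneg (hA : A.PosSemidef) : 0 ≤ detRoot A :=
  Real.rpow_nonneg (re_det_nonneg hA) _

lemma detRoot_eq_zero_of_det_eq_zero [Nonempty n] (hA : A.det = 0) : detRoot A = 0 := by
  simp [detRoot, hA]

lemma detRoot_smul [Nonempty n] (hA : A.PosSemidef) {c : ℝ} (hc : 0 ≤ c) :
    detRoot (c • A) = c * detRoot A := by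
  rw [detRoot, det_smul_of_tower, RCLike.smul_re,
    Real.mul_rpow (pow_nonneg hc _) (re_det_nonneg hA),
    Real.pow_rpow_inv_natCast hc Fintype.card_ne_zero, detRoot]

lemma detRoot_conjTranspose_mul_mul_same (hA : A.PosSemidef) (S : Matrix n n 𝕜) :
    detRoot (Sᴴ * A * S) = detRoot (Sᴴ * S) * detRoot A := by
  have hS : (Sᴴ * S).PosSemidef := posSemidef_conjTranspose_mul_self S
  have hdet : RCLike.re (Sᴴ * A * S).det = RCLike.re (Sᴴ * S).det * RCLike.re A.det := by
    rw [det_mul, det_mul, mul_right_comm, ← det_mul, RCLike.mul_re,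
      (RCLike.nonneg_iff.1 hA.det_nonneg).2, mul_zero, sub_zero]
  rw [detRoot, hdet, Real.mul_rpow (re_det_nonneg hS) (re_det_nonneg hA), detRoot, detRoot]

lemma detRoot_le_re_trace_div_card [Nonempty n] (hA : A.PosSemidef) :
    detRoot A ≤ RCLike.re A.trace / Fintype.card n := by
  have amgm := Real.geom_mean_le_arith_mean Finset.univ (fun _ : n ↦ (1 : ℝ))
    hA.isHermitian.eigenvalues (by simp) (by simp [Fintype.card_pos])
    (fun i _ ↦ hA.eigenvalues_nonneg i)
  simpa [detRoot, re_det_eq_prod_eigenvalues hA.isHermitian,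
    re_trace_eq_sum_eigenvalues hA.isHermitian] using amgm

lemma detRoot_add_detRoot_le_one [Nonempty n] (hA : A.PosSemidef) (hB : B.PosSemidef)
    (hAB : A + B = 1) : detRoot A + detRoot B ≤ 1 :=
  calc
    detRoot A + detRoot B
        ≤ RCLike.re A.trace / Fintype.card n + RCLike.re B.trace / Fintype.card n :=
      add_le_add (detRoot_le_re_trace_div_card hA) (detRoot_le_re_trace_div_card hB)
    _ = RCLike.re (A + B).trace / Fintype.card n := by rw [trace_add, map_add, add_div]
    _ = 1 := by simp [hAB]

open scoped MatrixOrder in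
lemma exists_isUnit_eq_conjTranspose_mul_self (hA : A.PosDef) :
    ∃ S : Matrix n n 𝕜, IsUnit S ∧ A = Sᴴ * S :=
  CStarAlgebra.isStrictlyPositive_iff_eq_star_mul_self.mp hA.isStrictlyPositive

lemma exists_posSemidef_conjTranspose_mul_mul_same_eq (hA : A.PosSemidef) {S : Matrix n n 𝕜}
    (hS : IsUnit S) : ∃ P : Matrix n n 𝕜, P.PosSemidef ∧ Sᴴ * P * S = A := by
  refine ⟨(S⁻¹)ᴴ * A * S⁻¹, hA.conjTranspose_mul_mul_same S⁻¹, ?_⟩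
  have hinv : S⁻¹ * S = 1 := nonsing_inv_mul S ((isUnit_iff_isUnit_det S).1 hS)
  calc
    Sᴴ * ((S⁻¹)ᴴ * A * S⁻¹) * S = (S⁻¹ * S)ᴴ * A * (S⁻¹ * S) := by
      simp only [conjTranspose_mul, mul_assoc]
    _ = A := by rw [hinv, conjTranspose_one, one_mul, mul_one]

lemma det_eq_zero_of_det_add_eq_zero (hA : A.PosSemidef) (hB : B.PosSemidef)
    (hAB : (A + B).det = 0) : A.det = 0 := by
  by_contra hdet
  have hA' : A.PosDef := hA.posDef_iff_det_ne_zero.2 hdet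
  exact (hA.add hB).posDef_iff_det_ne_zero.1 (hA'.add_posSemidef hB) hAB

theorem detRoot_add_detRoot_le [Nonempty n] (hA : A.PosSemidef) (hB : B.PosSemidef) :
    detRoot A + detRoot B ≤ detRoot (A + B) := by
  by_cases hdet : (A + B).det = 0
  · have hA0 : A.det = 0 := det_eq_zero_of_det_add_eq_zero hA hB hdet
    have hB0 : B.det = 0 := det_eq_zero_of_det_add_eq_zero hB hA (add_comm A B ▸ hdet)
    simp only [detRoot_eq_zero_of_det_eq_zero, hA0, hB0, hdet, add_zero, le_refl]
  obtain ⟨S, hS, hAB⟩ :=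
    exists_isUnit_eq_conjTranspose_mul_self ((hA.add hB).posDef_iff_det_ne_zero.2 hdet)
  obtain ⟨P, hP, hPA⟩ := exists_posSemidef_conjTranspose_mul_mul_same_eq hA hS
  obtain ⟨Q, hQ, hQB⟩ := exists_posSemidef_conjTranspose_mul_mul_same_eq hB hS
  have hPQ : P + Q = 1 := by
    apply hS.star.mul_left_cancel
    apply hS.mul_right_cancel
    rw [star_eq_conjTranspose, mul_add, add_mul, hPA, hQB, hAB, mul_one]
  calc
    detRoot A + detRoot B
        = detRoot (Sᴴ * S) * (detRoot P + detRoot Q) := by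
      rw [← hPA, ← hQB, detRoot_conjTranspose_mul_mul_same hP,
        detRoot_conjTranspose_mul_mul_same hQ, mul_add]
    _ ≤ detRoot (Sᴴ * S) :=
      mul_le_of_le_one_right (detRoot_nonneg (posSemidef_conjTranspose_mul_self S))
        (detRoot_add_detRoot_le_one hP hQ hPQ)
    _ = detRoot (A + B) := by rw [hAB]

theorem minkowski_determinant_general [Nonempty n] :
    ConcaveOn ℝ {A : Matrix n n 𝕜 | A.PosSemidef}
      (fun A ↦ RCLike.re A.det ^ (Fintype.card n : ℝ)⁻¹) := by
  refine ⟨fun A hA B hB a b ha hb _ ↦ (hA.smul ha).add (hB.smul hb),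
    fun A hA B hB a b ha hb _ ↦ ?_⟩
  change a * detRoot A + b * detRoot B ≤ detRoot (a • A + b • B)
  rw [← detRoot_smul hA ha, ← detRoot_smul hB hb]
  exact detRoot_add_detRoot_le (hA.smul ha) (hB.smul hb)

end

/-- Minkowski's determinant inequality: for positive definite Hermitian matrices `A`, `B`
and `τ ∈ [0,1]`,
`(det((1−τ)A + τB))^{1/n} ≥ (1−τ)(det A)^{1/n} + τ (det B)^{1/n}`,
i.e. `τ ↦ (det((1−τ)A + τB))^{1/n}` is concave on `[0,1]`. -/
theorem minkowski_determinant
    (n : ℕ) (hn : 1 ≤ n)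
    (A B : Matrix (Fin n) (Fin n) ℂ)
    (hA : A.PosDef) (hB : B.PosDef)
    (τ : ℝ) (hτ : τ ∈ Set.Icc (0 : ℝ) 1) :
    (1 - τ) * (A.det).re ^ ((n : ℝ)⁻¹) + τ * (B.det).re ^ ((n : ℝ)⁻¹)
      ≤ (((1 - τ) • A + τ • B).det).re ^ ((n : ℝ)⁻¹) := by
  have : Nonempty (Fin n) := Fin.pos_iff_nonempty.1 hn
  simpa using minkowski_determinant_general.2 hA.posSemidef hB.posSemidef
    (sub_nonneg.2 hτ.2) hτ.1 (sub_add_cancel 1 τ)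
end

section
/- Let n ≥ 1, let A, B ∈ Matrix n n ℂ be positive definite Hermitian matrices with Tr A = Tr B = 1 (density matrices), and let τ ∈ [0,1]. Define the von Neumann entropy S(M) := −Tr(M log M) for positive definite Hermitian M. Then S((1−τ)A + τB) ≤ (1−τ)² S(A) + τ² S(B) − τ(1−τ) Tr(A log B + B log A). -/
open scoped ComplexOrder

/-!
Let `H(P, M) = -Tr(P log M)`, so that `S(M) = H(M, M)`. Operator concavity of the logarithm makes
`H(P, ·)` convex for each positive semidefinite `P`. With `C = (1 - τ) A + τ B`, taking `P = C`
gives `S(C) = H(C, C) ≤ (1 - τ) H(C, A) + τ H(C, B)`, and since `H` is linear in its first argument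
the right-hand side expands to the claimed bound.
-/

variable {n : Type*} [Fintype n]

section TracePairing

open scoped MatrixOrder

variable {𝕜 : Type*} [RCLike 𝕜]

theorem trace_mul_nonneg_of_posSemidef {P Q : Matrix n n 𝕜} (hP : P.PosSemidef)
    (hQ : Q.PosSemidef) : 0 ≤ (P * Q).trace := by
  classical
  obtain ⟨X, rfl⟩ := CStarAlgebra.nonneg_iff_eq_star_mul_self.1 hP.nonneg
  calc
    0 ≤ (X * Q * star X).trace := (hQ.mul_mul_conjTranspose_same X).trace_nonneg
    _ = (star X * X * Q).trace := Matrix.trace_mul_cycle X Q (star X)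

theorem concaveOn_re_trace_mul_left {E : Type*} [AddCommMonoid E] [SMul ℝ E] {s : Set E}
    {F : E → Matrix n n 𝕜} (hF : ConcaveOn ℝ s F) {P : Matrix n n 𝕜} (hP : P.PosSemidef) :
    ConcaveOn ℝ s fun x ↦ RCLike.re (P * F x).trace := by
  refine ⟨hF.1, fun x hx y hy a b ha hb hab ↦ ?_⟩
  have hgap := Matrix.le_iff.1 (hF.2 hx hy ha hb hab)
  have htrace := (RCLike.nonneg_iff.1 (trace_mul_nonneg_of_posSemidef hP hgap)).1
  simpa [mul_sub, mul_add, RCLike.smul_re] using htrace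

end TracePairing

variable [DecidableEq n]

open scoped MatrixOrder in
theorem concaveOn_cfc_log_posDef :
    ConcaveOn ℝ {M : Matrix n n ℂ | M.PosDef} (cfc Real.log) := by
  -- The operator norm topology used by `CFC.log` unfolds to the entrywise topology used by `cfc`.
  open scoped Matrix.Norms.L2Operator in
  simpa only [Matrix.isStrictlyPositive_iff_posDef] using!
    CFC.concaveOn_log (A := Matrix n n ℂ)

/-- The quantum cross entropy `H(P, M) = -Tr(P log M)`. The trace is real for Hermitian `P` and `M`,
so its real part is taken in order to have a real-valued function. The convention `log 0 = 0` makes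
the value meaningful as a cross entropy only if the support of `P` lies in that of `M`. -/
noncomputable def crossEntropy (P M : Matrix n n ℂ) : ℝ :=
  -(P * cfc Real.log M).trace.re

/-- The von Neumann entropy `S(M) = -Tr(M log M)`, as the cross entropy of `M` with itself. -/
noncomputable def vonNeumannEntropy (M : Matrix n n ℂ) : ℝ :=
  crossEntropy M M

theorem crossEntropy_add_left (P Q M : Matrix n n ℂ) :
    crossEntropy (P + Q) M = crossEntropy P M + crossEntropy Q M := by
  simp [crossEntropy, add_mul, add_comm]

theorem crossEntropy_smul_left (c : ℝ) (P M : Matrix n n ℂ) :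
    crossEntropy (c • P) M = c * crossEntropy P M := by
  simp [crossEntropy]

theorem convexOn_crossEntropy_right {P : Matrix n n ℂ} (hP : P.PosSemidef) :
    ConvexOn ℝ {M : Matrix n n ℂ | M.PosDef} (crossEntropy P) :=
  (concaveOn_re_trace_mul_left concaveOn_cfc_log_posDef hP).neg

theorem von_neumann_entropy_inequality_general {A B : Matrix n n ℂ} (hA : A.PosDef) (hB : B.PosDef)
    {τ : ℝ} (hτ : τ ∈ Set.Icc (0 : ℝ) 1) :
    vonNeumannEntropy ((1 - τ) • A + τ • B)
      ≤ (1 - τ) ^ 2 * vonNeumannEntropy A + τ ^ 2 * vonNeumannEntropy B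
        + τ * (1 - τ) * (crossEntropy A B + crossEntropy B A) := by
  set C := (1 - τ) • A + τ • B with hC
  have h₀ : 0 ≤ 1 - τ := sub_nonneg.2 hτ.2
  have hC_psd : C.PosSemidef := (hA.posSemidef.smul h₀).add (hB.posSemidef.smul hτ.1)
  calc
    vonNeumannEntropy C ≤ (1 - τ) * crossEntropy C A + τ * crossEntropy C B :=
      (convexOn_crossEntropy_right hC_psd).2 hA hB h₀ hτ.1 (sub_add_cancel 1 τ)
    _ = (1 - τ) ^ 2 * vonNeumannEntropy A + τ ^ 2 * vonNeumannEntropy B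
        + τ * (1 - τ) * (crossEntropy A B + crossEntropy B A) := by
      simp only [hC, vonNeumannEntropy, crossEntropy_add_left, crossEntropy_smul_left]
      ring

/-- Almost-concavity of the von Neumann entropy `S(M) = −Tr(M log M)` of density matrices:
for positive definite Hermitian `A`, `B` with `Tr A = Tr B = 1` and `τ ∈ [0,1]`,
`S((1−τ)A + τB) ≤ (1−τ)² S(A) + τ² S(B) − τ(1−τ) Tr(A log B + B log A)`,
where `log M` is the functional calculus applied with `Real.log`. -/
theorem von_neumann_entropy_inequality
    (n : ℕ) (hn : 1 ≤ n)
    (A B : Matrix (Fin n) (Fin n) ℂ)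
    (hA : A.PosDef) (hB : B.PosDef)
    (htrA : A.trace = 1) (htrB : B.trace = 1)
    (τ : ℝ) (hτ : τ ∈ Set.Icc (0 : ℝ) 1)
    (hC : ((1 - τ) • A + τ • B).PosDef) :
    -((((1 - τ) • A + τ • B) * hC.1.cfc Real.log).trace).re
      ≤ (1 - τ) ^ 2 * (-((A * hA.1.cfc Real.log).trace).re)
        + τ ^ 2 * (-((B * hB.1.cfc Real.log).trace).re)
        - τ * (1 - τ) * ((A * hB.1.cfc Real.log + B * hA.1.cfc Real.log).trace).re := by
  have h := von_neumann_entropy_inequality_general hA hB hτ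
  simp only [vonNeumannEntropy, crossEntropy, hA.1.cfc_eq, hB.1.cfc_eq, hC.1.cfc_eq] at h
  rw [Matrix.trace_add, Complex.add_re]
  linarith
end

section
/- Let n ≥ 1, let A, B ∈ Matrix n n ℂ be Hermitian matrices with eigenvalues, counted with multiplicity and ordered nondecreasingly, α_1 ≤ … ≤ α_n and β_1 ≤ … ≤ β_n respectively. For τ ∈ [0,1] let λ_1(τ) ≤ … ≤ λ_n(τ) denote the nondecreasingly ordered eigenvalues of (1−τ)A + τB. Then for every 1 ≤ m ≤ n and every τ ∈ [0,1]: (i) Σ_{j=1}^m ((1−τ)α_j + τβ_j) ≤ Σ_{j=1}^m λ_j(τ), and (ii) Σ_{j=1}^m λ_j(τ) ≤ Σ_{j=1}^m [(1−τ)² α_j + τ² β_j + τ(1−τ)(α_{n+1−j} + β_{n+1−j})]. In particular (taking τ = 1/2 and rescaling), Σ_{j=1}^m (α_j + β_j) ≤ Σ_{j=1}^m λ_j(A+B) ≤ (1/2) Σ_{j=1}^m (α_j + β_j + α_{n+1−j} + β_{n+1−j}), where λ_1(A+B) ≤ … ≤ λ_n(A+B) are the nondecreasingly ordered eigenvalues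 of A+B. -/
open scoped BigOperators

/-!
If `A` has increasing eigenvalues `α`, then `∑_{j ≤ m} α_j` is the minimum of
`∑_{j ≤ m} ⟨A u_j, u_j⟩` over orthonormal families `u` (Ky Fan): in an eigenbasis `v` of `A` this
sum is `∑ w_i α_i` with weights `w_i = ∑_j |⟨v_i, u_j⟩|²`, which lie in `[0, 1]` by Bessel's
inequality and add up to `m`. Testing the minimum principles of `A` and `B` on eigenvectors of
`A + B` gives the lower bound. Testing that of `A + B` on eigenvectors of `A`, and bounding the `B`
part by the corresponding maximum principle, gives `∑ λ_j ≤ ∑ (α_j + β_{n+1-j})`; the upper bounds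
average this with its mirror image. Convex combinations reduce to sums by rescaling `A` and `B`.
-/

theorem sum_le_sum_mul_of_isLowerSet {ι R : Type*} [Fintype ι] [LinearOrder ι]
    [CommRing R] [LinearOrder R] [IsStrictOrderedRing R] {α w : ι → R} {s : Finset ι}
    (hα : Monotone α) (hs : IsLowerSet (s : Set ι)) (hw₀ : ∀ i, 0 ≤ w i) (hw₁ : ∀ i, w i ≤ 1)
    (hw : ∑ i, w i = s.card) :
    ∑ i ∈ s, α i ≤ ∑ i, α i * w i := by
  obtain rfl | hne := s.eq_empty_or_nonempty
  · have hw_zero : ∀ i, w i = 0 := by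
      simpa [Finset.sum_eq_zero_iff_of_nonneg, hw₀] using hw
    simp [hw_zero]
  set c := α (s.max' hne)
  have hin : ∑ i ∈ s, (α i - c) ≤ ∑ i ∈ s, (α i - c) * w i :=
    Finset.sum_le_sum fun i hi ↦
      le_mul_of_le_one_right (sub_nonpos.2 <| hα <| s.le_max' i hi) (hw₁ i)
  have hout : 0 ≤ ∑ i ∈ sᶜ, (α i - c) * w i := by
    refine Finset.sum_nonneg fun i hi ↦ mul_nonneg (sub_nonneg.2 <| hα ?_) (hw₀ i)
    exact le_of_not_ge fun h ↦ Finset.mem_compl.1 hi (hs h (s.max'_mem hne))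
  have hsplit : ∑ i, α i * w i - s.card * c
      = ∑ i ∈ s, (α i - c) * w i + ∑ i ∈ sᶜ, (α i - c) * w i := by
    rw [Finset.sum_add_sum_compl, ← hw]
    simp only [sub_mul, Finset.sum_sub_distrib, Finset.sum_mul, mul_comm c]
  rw [Finset.sum_sub_distrib, Finset.sum_const, nsmul_eq_mul] at hin
  linarith

section Operator

open RCLike
open scoped InnerProductSpace

variable {𝕜 E ι : Type*} [RCLike 𝕜] [NormedAddCommGroup E] [InnerProductSpace 𝕜 E] [Fintype ι]

/-- `HasEigenvalueFamily T α`: the real family `α` lists the eigenvalues of the operator `T` with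
multiplicity, along some orthonormal basis of eigenvectors. No order on `α` is imposed. -/
def HasEigenvalueFamily (T : E →ₗ[𝕜] E) (α : ι → ℝ) : Prop :=
  ∃ v : OrthonormalBasis ι 𝕜 E, ∀ i, T (v i) = (α i : 𝕜) • v i

theorem re_inner_map_self_of_eigenvector {T : E →ₗ[𝕜] E} {a : ℝ} {x : E}
    (hx : ‖x‖ = 1) (hT : T x = (a : 𝕜) • x) : re ⟪T x, x⟫_𝕜 = a := by
  simp [hT, inner_smul_left, inner_self_eq_norm_sq_to_K, hx]

theorem re_inner_map_self_eq_sum {T : E →ₗ[𝕜] E} {α : ι → ℝ} {v : OrthonormalBasis ι 𝕜 E}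
    (hv : ∀ i, T (v i) = (α i : 𝕜) • v i) (x : E) :
    re ⟪T x, x⟫_𝕜 = ∑ i, α i * ‖⟪v i, x⟫_𝕜‖ ^ 2 := by
  have hTx : T x = ∑ i, ⟪v i, x⟫_𝕜 • (α i : 𝕜) • v i := by
    conv_lhs => rw [← v.sum_repr' x]
    simp only [map_sum, map_smul, hv]
  rw [hTx, sum_inner, map_sum]
  refine Finset.sum_congr rfl fun i _ ↦ ?_
  rw [inner_smul_left, inner_smul_left, conj_ofReal, mul_left_comm, RCLike.conj_mul]
  norm_cast

namespace HasEigenvalueFamily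

variable {T U : E →ₗ[𝕜] E} {α β γ : ι → ℝ}

theorem neg (hT : HasEigenvalueFamily T α) : HasEigenvalueFamily (-T) (-α) := by
  obtain ⟨v, hv⟩ := hT
  exact ⟨v, fun i ↦ by simp [hv]⟩

theorem smul (hT : HasEigenvalueFamily T α) (c : ℝ) :
    HasEigenvalueFamily ((c : 𝕜) • T) (c • α) := by
  obtain ⟨v, hv⟩ := hT
  exact ⟨v, fun i ↦ by simp [hv, smul_smul]⟩

theorem comp_equiv {κ : Type*} [Fintype κ] (hT : HasEigenvalueFamily T α) (σ : κ ≃ ι) :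
    HasEigenvalueFamily T (α ∘ σ) := by
  obtain ⟨v, hv⟩ := hT
  exact ⟨v.reindex σ.symm, fun i ↦ by simp [hv]⟩

section LowerSet

variable [LinearOrder ι] {s : Finset ι}

theorem sum_le_sum_re_inner {κ : Type*} {t : Finset κ} {u : κ → E}
    (hT : HasEigenvalueFamily T α) (hα : Monotone α) (hs : IsLowerSet (s : Set ι))
    (hu : Orthonormal 𝕜 u) (hst : t.card = s.card) :
    ∑ i ∈ s, α i ≤ ∑ j ∈ t, re ⟪T (u j), u j⟫_𝕜 := by
  obtain ⟨v, hv⟩ := hT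
  set w : ι → ℝ := fun i ↦ ∑ j ∈ t, ‖⟪v i, u j⟫_𝕜‖ ^ 2 with hw
  have hw₁ (i : ι) : w i ≤ 1 := by
    simpa [hw, norm_inner_symm (v i)] using hu.sum_inner_products_le (v i) (s := t)
  have hw_sum : ∑ i, w i = s.card := by
    rw [hw, Finset.sum_comm]
    simp [v.sum_sq_norm_inner_right, hu.norm_eq_one, hst]
  calc ∑ i ∈ s, α i ≤ ∑ i, α i * w i :=
        sum_le_sum_mul_of_isLowerSet hα hs (fun i ↦ by positivity) hw₁ hw_sum
    _ = ∑ j ∈ t, re ⟪T (u j), u j⟫_𝕜 := by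
        simp only [re_inner_map_self_eq_sum hv, hw, Finset.mul_sum]
        exact Finset.sum_comm

theorem sum_re_inner_le_sum {κ : Type*} {t : Finset κ} {u : κ → E}
    (hT : HasEigenvalueFamily T α) (hα : Antitone α) (hs : IsLowerSet (s : Set ι))
    (hu : Orthonormal 𝕜 u) (hst : t.card = s.card) :
    ∑ j ∈ t, re ⟪T (u j), u j⟫_𝕜 ≤ ∑ i ∈ s, α i := by
  simpa using hT.neg.sum_le_sum_re_inner hα.neg hs hu hst

theorem sum_add_sum_le_sum (hT : HasEigenvalueFamily T α) (hU : HasEigenvalueFamily U β)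
    (hTU : HasEigenvalueFamily (T + U) γ) (hα : Monotone α) (hβ : Monotone β)
    (hs : IsLowerSet (s : Set ι)) :
    ∑ i ∈ s, α i + ∑ i ∈ s, β i ≤ ∑ i ∈ s, γ i := by
  obtain ⟨v, hv⟩ := hTU
  calc ∑ i ∈ s, α i + ∑ i ∈ s, β i
      ≤ ∑ i ∈ s, re ⟪T (v i), v i⟫_𝕜 + ∑ i ∈ s, re ⟪U (v i), v i⟫_𝕜 :=
        add_le_add (hT.sum_le_sum_re_inner hα hs v.orthonormal rfl)
          (hU.sum_le_sum_re_inner hβ hs v.orthonormal rfl)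
    _ = ∑ i ∈ s, re ⟪(T + U) (v i), v i⟫_𝕜 := by
        simp only [LinearMap.add_apply, inner_add_left, map_add, Finset.sum_add_distrib]
    _ = ∑ i ∈ s, γ i := by
        simp only [re_inner_map_self_of_eigenvector (v.norm_eq_one _) (hv _)]

theorem sum_convex_le_sum (hT : HasEigenvalueFamily T α) (hU : HasEigenvalueFamily U β)
    {τ : ℝ} (hC : HasEigenvalueFamily (((1 - τ : ℝ) : 𝕜) • T + (τ : 𝕜) • U) γ)
    (hα : Monotone α) (hβ : Monotone β) (hτ : τ ∈ Set.Icc (0 : ℝ) 1)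
    (hs : IsLowerSet (s : Set ι)) :
    ∑ i ∈ s, ((1 - τ) * α i + τ * β i) ≤ ∑ i ∈ s, γ i := by
  rw [Finset.sum_add_distrib]
  exact (hT.smul (1 - τ)).sum_add_sum_le_sum (hU.smul τ) hC
    (hα.const_mul (sub_nonneg.2 hτ.2)) (hβ.const_mul hτ.1) hs

theorem sum_le_sum_add_sum (hT : HasEigenvalueFamily T α) (hU : HasEigenvalueFamily U β)
    (hTU : HasEigenvalueFamily (T + U) γ) (hβ : Antitone β) (hγ : Monotone γ)
    (hs : IsLowerSet (s : Set ι)) :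
    ∑ i ∈ s, γ i ≤ ∑ i ∈ s, α i + ∑ i ∈ s, β i := by
  obtain ⟨v, hv⟩ := hT
  calc ∑ i ∈ s, γ i ≤ ∑ i ∈ s, re ⟪(T + U) (v i), v i⟫_𝕜 :=
        hTU.sum_le_sum_re_inner hγ hs v.orthonormal rfl
    _ = ∑ i ∈ s, α i + ∑ i ∈ s, re ⟪U (v i), v i⟫_𝕜 := by
        simp only [LinearMap.add_apply, inner_add_left, map_add, Finset.sum_add_distrib,
          re_inner_map_self_of_eigenvector (v.norm_eq_one _) (hv _)]
    _ ≤ ∑ i ∈ s, α i + ∑ i ∈ s, β i := by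
        grw [hU.sum_re_inner_le_sum hβ hs v.orthonormal rfl]

end LowerSet

section Rev

variable {n : ℕ} {α β γ : Fin n → ℝ} {s : Finset (Fin n)}

theorem sum_le_sum_add_sum_rev (hT : HasEigenvalueFamily T α) (hU : HasEigenvalueFamily U β)
    (hTU : HasEigenvalueFamily (T + U) γ) (hβ : Monotone β) (hγ : Monotone γ)
    (hs : IsLowerSet (s : Set (Fin n))) :
    ∑ j ∈ s, γ j ≤ ∑ j ∈ s, α j + ∑ j ∈ s, β j.rev :=
  hT.sum_le_sum_add_sum (hU.comp_equiv Fin.revPerm) hTU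
    (hβ.comp_antitone Fin.rev_anti) hγ hs

theorem sum_le_half_sum_add_rev (hT : HasEigenvalueFamily T α) (hU : HasEigenvalueFamily U β)
    (hTU : HasEigenvalueFamily (T + U) γ) (hα : Monotone α) (hβ : Monotone β) (hγ : Monotone γ)
    (hs : IsLowerSet (s : Set (Fin n))) :
    ∑ j ∈ s, γ j ≤ (1 / 2) * ∑ j ∈ s, (α j + β j + α j.rev + β j.rev) := by
  have hβ_rev := hT.sum_le_sum_add_sum_rev hU hTU hβ hγ hs
  have hα_rev := hU.sum_le_sum_add_sum_rev hT (by rwa [add_comm]) hα hγ hs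
  simp only [Finset.sum_add_distrib]
  linarith

theorem sum_le_sum_convex_rev (hT : HasEigenvalueFamily T α) (hU : HasEigenvalueFamily U β)
    {τ : ℝ} (hC : HasEigenvalueFamily (((1 - τ : ℝ) : 𝕜) • T + (τ : 𝕜) • U) γ)
    (hα : Monotone α) (hβ : Monotone β) (hγ : Monotone γ) (hτ : τ ∈ Set.Icc (0 : ℝ) 1)
    (hs : IsLowerSet (s : Set (Fin n))) :
    ∑ j ∈ s, γ j ≤ ∑ j ∈ s,
      ((1 - τ) ^ 2 * α j + τ ^ 2 * β j + τ * (1 - τ) * (α j.rev + β j.rev)) := by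
  have h1τ : 0 ≤ 1 - τ := sub_nonneg.2 hτ.2
  have hβ_rev := (hT.smul (1 - τ)).sum_le_sum_add_sum_rev (hU.smul τ) hC
    (hβ.const_mul hτ.1) hγ hs
  have hα_rev := (hU.smul τ).sum_le_sum_add_sum_rev (hT.smul (1 - τ)) (by rwa [add_comm])
    (hα.const_mul h1τ) hγ hs
  calc ∑ j ∈ s, γ j = (1 - τ) * ∑ j ∈ s, γ j + τ * ∑ j ∈ s, γ j := by ring
    _ ≤ (1 - τ) * (∑ j ∈ s, (1 - τ) * α j + ∑ j ∈ s, τ * β j.rev)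
        + τ * (∑ j ∈ s, τ * β j + ∑ j ∈ s, (1 - τ) * α j.rev) :=
      add_le_add (mul_le_mul_of_nonneg_left hβ_rev h1τ) (mul_le_mul_of_nonneg_left hα_rev hτ.1)
    _ = _ := by
      simp only [Finset.sum_add_distrib, ← Finset.mul_sum]
      ring

end Rev

end HasEigenvalueFamily

end Operator

section Matrix

variable {𝕜 : Type*} [RCLike 𝕜]

theorem hasEigenvalueFamily_toEuclideanLin {ι : Type*} [Fintype ι] [DecidableEq ι]
    {A : Matrix ι ι 𝕜} (hA : A.IsHermitian) {α : ι → ℝ}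
    (hα : ∃ σ : Equiv.Perm ι, α = hA.eigenvalues ∘ σ) :
    HasEigenvalueFamily (Matrix.toEuclideanLin A) α := by
  obtain ⟨σ, rfl⟩ := hα
  refine HasEigenvalueFamily.comp_equiv ⟨hA.eigenvectorBasis, fun i ↦ ?_⟩ σ
  rw [Matrix.toLpLin_apply, hA.mulVec_eigenvectorBasis, RCLike.real_smul_eq_coe_smul (K := 𝕜)]
  rfl

theorem toEuclideanLin_real_smul {ι κ : Type*} [Fintype ι] [DecidableEq ι] (c : ℝ)
    (A : Matrix κ ι 𝕜) :
    Matrix.toEuclideanLin (c • A) = (c : 𝕜) • Matrix.toEuclideanLin A := by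
  rw [RCLike.real_smul_eq_coe_smul (K := 𝕜), map_smul]

theorem isLowerSet_filter_val_lt (n m : ℕ) :
    IsLowerSet (Finset.univ.filter (fun j : Fin n => (j : ℕ) < m) : Set (Fin n)) := by
  intro i j hji hi
  simp only [Finset.coe_filter, Finset.mem_univ, true_and, Set.mem_ofPred_eq] at hi ⊢
  exact lt_of_le_of_lt hji hi

theorem eigenvalue_sum_inequalities_general {n : ℕ} {A B : Matrix (Fin n) (Fin n) 𝕜}
    (hA : A.IsHermitian) (hB : B.IsHermitian) {α β : Fin n → ℝ}
    (hαmono : Monotone α) (hβmono : Monotone β)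
    (hαeig : ∃ σ : Equiv.Perm (Fin n), α = hA.eigenvalues ∘ σ)
    (hβeig : ∃ σ : Equiv.Perm (Fin n), β = hB.eigenvalues ∘ σ)
    {τ : ℝ} (hτ : τ ∈ Set.Icc (0 : ℝ) 1) (hC : ((1 - τ) • A + τ • B).IsHermitian)
    {lam : Fin n → ℝ} (hlammono : Monotone lam)
    (hlameig : ∃ σ : Equiv.Perm (Fin n), lam = hC.eigenvalues ∘ σ)
    (hAB : (A + B).IsHermitian) {μ : Fin n → ℝ} (hμmono : Monotone μ)
    (hμeig : ∃ σ : Equiv.Perm (Fin n), μ = hAB.eigenvalues ∘ σ) (m : ℕ) :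
    (∑ j ∈ Finset.univ.filter (fun j : Fin n => (j : ℕ) < m), ((1 - τ) * α j + τ * β j)
        ≤ ∑ j ∈ Finset.univ.filter (fun j : Fin n => (j : ℕ) < m), lam j)
    ∧ (∑ j ∈ Finset.univ.filter (fun j : Fin n => (j : ℕ) < m), lam j
        ≤ ∑ j ∈ Finset.univ.filter (fun j : Fin n => (j : ℕ) < m),
            ((1 - τ) ^ 2 * α j + τ ^ 2 * β j + τ * (1 - τ) * (α j.rev + β j.rev)))
    ∧ (∑ j ∈ Finset.univ.filter (fun j : Fin n => (j : ℕ) < m), (α j + β j)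
        ≤ ∑ j ∈ Finset.univ.filter (fun j : Fin n => (j : ℕ) < m), μ j)
    ∧ (∑ j ∈ Finset.univ.filter (fun j : Fin n => (j : ℕ) < m), μ j
        ≤ (1 / 2) * ∑ j ∈ Finset.univ.filter (fun j : Fin n => (j : ℕ) < m),
            (α j + β j + α j.rev + β j.rev)) := by
  have hα := hasEigenvalueFamily_toEuclideanLin hA hαeig
  have hβ := hasEigenvalueFamily_toEuclideanLin hB hβeig
  have hlam := hasEigenvalueFamily_toEuclideanLin hC hlameig
  have hμ := hasEigenvalueFamily_toEuclideanLin hAB hμeig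
  rw [map_add] at hlam hμ
  rw [toEuclideanLin_real_smul, toEuclideanLin_real_smul] at hlam
  have hs := isLowerSet_filter_val_lt n m
  refine ⟨hα.sum_convex_le_sum hβ hlam hαmono hβmono hτ hs,
    hα.sum_le_sum_convex_rev hβ hlam hαmono hβmono hlammono hτ hs, ?_,
    hα.sum_le_half_sum_add_rev hβ hμ hαmono hβmono hμmono hs⟩
  rw [Finset.sum_add_distrib]
  exact hα.sum_add_sum_le_sum hβ hμ hαmono hβmono hs

end Matrix

/-- Eigenvalue inequalities for convex combinations and sums of Hermitian matrices.
`α`, `β`, `lam τ` and `μ` are the nondecreasing rearrangements of the eigenvalues (with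
multiplicity) of `A`, `B`, `(1−τ)A + τB` and `A + B` respectively (0-based indexing, so
`Σ_{j=1}^m` becomes a sum over `j : Fin n` with `(j : ℕ) < m`, and the index `n+1−j` of the
statement becomes `Fin.rev j`). -/
theorem eigenvalue_sum_inequalities
    (n : ℕ) (hn : 1 ≤ n)
    (A B : Matrix (Fin n) (Fin n) ℂ)
    (hA : A.IsHermitian) (hB : B.IsHermitian)
    (α β : Fin n → ℝ)
    (hαmono : Monotone α) (hβmono : Monotone β)
    (hαeig : ∃ σ : Equiv.Perm (Fin n), α = hA.eigenvalues ∘ σ)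
    (hβeig : ∃ σ : Equiv.Perm (Fin n), β = hB.eigenvalues ∘ σ)
    (hC : ∀ τ : ℝ, ((1 - τ) • A + τ • B).IsHermitian)
    (lam : ℝ → Fin n → ℝ)
    (hlammono : ∀ τ : ℝ, Monotone (lam τ))
    (hlameig : ∀ τ : ℝ, ∃ σ : Equiv.Perm (Fin n), lam τ = (hC τ).eigenvalues ∘ σ)
    (hAB : (A + B).IsHermitian)
    (μ : Fin n → ℝ)
    (hμmono : Monotone μ)
    (hμeig : ∃ σ : Equiv.Perm (Fin n), μ = hAB.eigenvalues ∘ σ)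
    (m : ℕ) (hm1 : 1 ≤ m) (hmn : m ≤ n)
    (τ : ℝ) (hτ : τ ∈ Set.Icc (0 : ℝ) 1) :
    (∑ j ∈ Finset.univ.filter (fun j : Fin n => (j : ℕ) < m), ((1 - τ) * α j + τ * β j)
        ≤ ∑ j ∈ Finset.univ.filter (fun j : Fin n => (j : ℕ) < m), lam τ j)
    ∧ (∑ j ∈ Finset.univ.filter (fun j : Fin n => (j : ℕ) < m), lam τ j
        ≤ ∑ j ∈ Finset.univ.filter (fun j : Fin n => (j : ℕ) < m),
            ((1 - τ) ^ 2 * α j + τ ^ 2 * β j + τ * (1 - τ) * (α j.rev + β j.rev)))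
    ∧ (∑ j ∈ Finset.univ.filter (fun j : Fin n => (j : ℕ) < m), (α j + β j)
        ≤ ∑ j ∈ Finset.univ.filter (fun j : Fin n => (j : ℕ) < m), μ j)
    ∧ (∑ j ∈ Finset.univ.filter (fun j : Fin n => (j : ℕ) < m), μ j
        ≤ (1 / 2) * ∑ j ∈ Finset.univ.filter (fun j : Fin n => (j : ℕ) < m),
            (α j + β j + α j.rev + β j.rev)) := by
  exact eigenvalue_sum_inequalities_general hA hB hαmono hβmono hαeig hβeig hτ (hC τ)
    (hlammono τ) (hlameig τ) hAB hμmono hμeig m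
end
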